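/- Let (v¹, v², ξ₁, ξ₂, ξ₃) be a classical solution of the forward coupled observer system on [0,T], and define the Lyapunov function V(t) := (1/2)·(∫₀¹ (|∂ₓv¹(t,x)|² + |v²(t,x)|²) dx + γ₁ω²·ξ₁(t)² + γ₁·ξ₂(t)²). Then V is differentiable on [0,T] and V'(t) = −γ₁γ₂ω²·ξ₁(t)² ≤ 0 for every t ∈ [0,T]. -/

import Mathlib

open Set Filter MeasureTheory intervalIntegral

/-- A classical solution of the forward coupled observer system on `[0,T]`:
`∂ₜv¹ = v²`, `∂ₜv² = ∂ₓₓv¹` on `[0,T] × [0,1]`, boundary conditions `v¹(t,1) = 0`,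
`v¹(t,0) = γ₁ξ₁(t) + γ₁γ₂ξ₃(t)`, and the observer ODEs `ξ₁' = ξ₂ − γ₂ξ₁`,
`ξ₂' = −ω²ξ₁ + ∂ₓv¹(·,0)`, `ξ₃' = ξ₁` on `[0,T]`. -/
structure FwdObserverSol (T ω γ₁ γ₂ : ℝ) where
  v1 : ℝ → ℝ → ℝ
  v2 : ℝ → ℝ → ℝ
  ξ1 : ℝ → ℝ
  ξ2 : ℝ → ℝ
  ξ3 : ℝ → ℝ
  smooth_v1 : ContDiff ℝ 2 (Function.uncurry v1)
  smooth_v2 : ContDiff ℝ 2 (Function.uncurry v2)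
  smooth_ξ1 : ContDiff ℝ 1 ξ1
  smooth_ξ2 : ContDiff ℝ 1 ξ2
  smooth_ξ3 : ContDiff ℝ 1 ξ3
  pde1 : ∀ t ∈ Icc (0:ℝ) T, ∀ x ∈ Icc (0:ℝ) 1, deriv (fun s => v1 s x) t = v2 t x
  pde2 : ∀ t ∈ Icc (0:ℝ) T, ∀ x ∈ Icc (0:ℝ) 1,
    deriv (fun s => v2 s x) t = deriv (deriv (fun y => v1 t y)) x
  bc1 : ∀ t ∈ Icc (0:ℝ) T, v1 t 1 = 0
  bc0 : ∀ t ∈ Icc (0:ℝ) T, v1 t 0 = γ₁ * ξ1 t + γ₁ * γ₂ * ξ3 t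
  ode1 : ∀ t ∈ Icc (0:ℝ) T, deriv ξ1 t = ξ2 t - γ₂ * ξ1 t
  ode2 : ∀ t ∈ Icc (0:ℝ) T, deriv ξ2 t = -ω ^ 2 * ξ1 t + deriv (fun y => v1 t y) 0
  ode3 : ∀ t ∈ Icc (0:ℝ) T, deriv ξ3 t = ξ1 t

/-- The partial derivative of a differentiable function on the plane in the first variable. -/
theorem DifferentiableAt.hasDerivAt_prodMk_left {g : ℝ × ℝ → ℝ} {t x : ℝ}
    (hg : DifferentiableAt ℝ g (t, x)) :
    HasDerivAt (fun s => g (s, x)) (fderiv ℝ g (t, x) (1, 0)) t :=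
  hg.hasFDerivAt.comp_hasDerivAt t ((hasDerivAt_id t).prodMk (hasDerivAt_const t x))

/-- The partial derivative of a differentiable function on the plane in the second variable. -/
theorem DifferentiableAt.hasDerivAt_prodMk_right {g : ℝ × ℝ → ℝ} {t x : ℝ}
    (hg : DifferentiableAt ℝ g (t, x)) :
    HasDerivAt (fun y => g (t, y)) (fderiv ℝ g (t, x) (0, 1)) x :=
  hg.hasFDerivAt.comp_hasDerivAt x ((hasDerivAt_const x t).prodMk (hasDerivAt_id x))

/-- Differentiation under the integral sign for a `C¹` function on the plane. -/
theorem ContDiff.hasDerivAt_intervalIntegral {g : ℝ × ℝ → ℝ} (hg : ContDiff ℝ 1 g)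
    (a b t : ℝ) :
    HasDerivAt (fun s => ∫ x in a..b, g (s, x)) (∫ x in a..b, fderiv ℝ g (t, x) (1, 0)) t := by
  have hg' : Continuous fun q => fderiv ℝ g q (1, 0) :=
    (hg.continuous_fderiv one_ne_zero).clm_apply continuous_const
  have hslice (s : ℝ) : Continuous fun x => g (s, x) := hg.continuous.comp (by fun_prop)
  obtain ⟨C, hC⟩ := ((isCompact_Icc (a := t - 1) (b := t + 1)).prod
    (isCompact_uIcc (a := a) (b := b))).exists_bound_of_continuousOn hg'.continuousOn
  refine (intervalIntegral.hasDerivAt_integral_of_dominated_loc_of_deriv_le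
    (F := fun s x => g (s, x)) (F' := fun s x => fderiv ℝ g (s, x) (1, 0))
    (bound := fun _ => C) (Icc_mem_nhds (by linarith : t - 1 < t) (by linarith : t < t + 1))
    (.of_forall fun s => (hslice s).aestronglyMeasurable)
    ((hslice t).intervalIntegrable a b) ?_ ?_ intervalIntegrable_const ?_).2
  · exact (hg'.comp (by fun_prop : Continuous fun x : ℝ => (t, x))).aestronglyMeasurable
  · exact .of_forall fun x hx s hs => hC (s, x) ⟨hs, uIoc_subset_uIcc hx⟩
  · exact .of_forall fun x _ s _ =>
      (hg.differentiable one_ne_zero (s, x)).hasDerivAt_prodMk_left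

/-- Two differentiable functions that agree on a nondegenerate interval have the same derivative
at each of its points, the endpoints included. -/
theorem HasDerivAt.eq_of_eqOn_Icc {f g : ℝ → ℝ} {f' g' a b t : ℝ} (hab : a < b)
    (ht : t ∈ Icc a b) (hf : HasDerivAt f f' t) (hg : HasDerivAt g g' t)
    (h : EqOn f g (Icc a b)) : f' = g' :=
  (uniqueDiffOn_Icc hab t ht).eq_deriv _ hf.hasDerivWithinAt
    (hg.hasDerivWithinAt.congr h (h ht))

namespace FwdObserverSol

variable {T ω γ₁ γ₂ : ℝ} (S : FwdObserverSol T ω γ₁ γ₂)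

theorem deriv_v1_eq_fderiv (t x : ℝ) :
    deriv (fun y => S.v1 t y) x = fderiv ℝ (Function.uncurry S.v1) (t, x) (0, 1) :=
  (S.smooth_v1.differentiable two_ne_zero (t, x)).hasDerivAt_prodMk_right.deriv

theorem fderiv_v1_time {t x : ℝ} (ht : t ∈ Icc 0 T) (hx : x ∈ Icc (0 : ℝ) 1) :
    fderiv ℝ (Function.uncurry S.v1) (t, x) (1, 0) = S.v2 t x := by
  rw [← S.pde1 t ht x hx]
  exact (S.smooth_v1.differentiable two_ne_zero (t, x)).hasDerivAt_prodMk_left.deriv.symm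

theorem contDiff_fderiv_v1 (u : ℝ × ℝ) :
    ContDiff ℝ 1 fun q => fderiv ℝ (Function.uncurry S.v1) q u :=
  (S.smooth_v1.fderiv_right (m := 1) (by norm_num)).clm_apply contDiff_const

theorem v2_right {t : ℝ} (hT : 0 < T) (ht : t ∈ Icc 0 T) : S.v2 t 1 = 0 := by
  rw [← S.fderiv_v1_time ht (right_mem_Icc.2 zero_le_one)]
  exact (S.smooth_v1.differentiable two_ne_zero (t, 1)).hasDerivAt_prodMk_left.eq_of_eqOn_Icc
    hT ht (hasDerivAt_const t 0) S.bc1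

theorem v2_left {t : ℝ} (hT : 0 < T) (ht : t ∈ Icc 0 T) : S.v2 t 0 = γ₁ * S.ξ2 t := by
  have h1 := (S.smooth_ξ1.differentiable one_ne_zero t).hasDerivAt
  have h3 := (S.smooth_ξ3.differentiable one_ne_zero t).hasDerivAt
  have h := (S.smooth_v1.differentiable two_ne_zero
    (t, 0)).hasDerivAt_prodMk_left.eq_of_eqOn_Icc
    hT ht ((h1.const_mul γ₁).add (h3.const_mul (γ₁ * γ₂))) S.bc0
  rw [S.fderiv_v1_time ht (left_mem_Icc.2 zero_le_one), S.ode1 t ht, S.ode3 t ht] at h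
  rw [h]
  ring

/-- The mixed second derivative `∂ₜ∂ₓv¹` equals `∂ₓv²`. -/
theorem fderiv_fderiv_v1_time {t x : ℝ} (ht : t ∈ Icc 0 T) (hx : x ∈ Icc (0 : ℝ) 1) :
    fderiv ℝ (fun q => fderiv ℝ (Function.uncurry S.v1) q (0, 1)) (t, x) (1, 0) =
      fderiv ℝ (Function.uncurry S.v2) (t, x) (0, 1) := by
  have hd : DifferentiableAt ℝ (fderiv ℝ (Function.uncurry S.v1)) (t, x) :=
    (S.smooth_v1.fderiv_right (m := 1) (by norm_num)).differentiable one_ne_zero (t, x)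
  have happ (u w : ℝ × ℝ) :
      fderiv ℝ (fun q => fderiv ℝ (Function.uncurry S.v1) q u) (t, x) w =
        fderiv ℝ (fderiv ℝ (Function.uncurry S.v1)) (t, x) w u := by
    rw [fderiv_clm_apply hd (differentiableAt_const u)]
    simp
  have hsymm := (S.smooth_v1.contDiffAt (x := (t, x))).isSymmSndFDerivAt (by simp)
  rw [happ, hsymm.eq, ← happ]
  exact ((S.contDiff_fderiv_v1 (1, 0)).differentiable one_ne_zero
    (t, x)).hasDerivAt_prodMk_right.eq_of_eqOn_Icc zero_lt_one hx
    (S.smooth_v2.differentiable two_ne_zero (t, x)).hasDerivAt_prodMk_right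
    fun y hy => S.fderiv_v1_time ht hy

theorem fderiv_v2_time {t x : ℝ} (ht : t ∈ Icc 0 T) (hx : x ∈ Icc (0 : ℝ) 1) :
    fderiv ℝ (Function.uncurry S.v2) (t, x) (1, 0) =
      fderiv ℝ (fun q => fderiv ℝ (Function.uncurry S.v1) q (0, 1)) (t, x) (0, 1) := by
  have h := S.pde2 t ht x hx
  simp_rw [funext (S.deriv_v1_eq_fderiv t)] at h
  rw [← ((S.contDiff_fderiv_v1 (0, 1)).differentiable one_ne_zero
    (t, x)).hasDerivAt_prodMk_right.deriv, ← h]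
  exact (S.smooth_v2.differentiable two_ne_zero (t, x)).hasDerivAt_prodMk_left.deriv.symm

/-- The energy of the wave component changes only through the flux at `x = 0`. -/
theorem hasDerivAt_energy {t : ℝ} (hT : 0 < T) (ht : t ∈ Icc 0 T) :
    HasDerivAt
      (fun s => ∫ x in (0 : ℝ)..1, ((deriv (fun y => S.v1 s y) x) ^ 2 + (S.v2 s x) ^ 2))
      (-(2 * deriv (fun y => S.v1 t y) 0 * (γ₁ * S.ξ2 t))) t := by
  simp_rw [S.deriv_v1_eq_fderiv]
  set p : ℝ × ℝ → ℝ := fun q => fderiv ℝ (Function.uncurry S.v1) q (0, 1) with hp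
  set w : ℝ × ℝ → ℝ := Function.uncurry S.v2
  have hpC : ContDiff ℝ 1 p := S.contDiff_fderiv_v1 (0, 1)
  have hwC : ContDiff ℝ 1 w := S.smooth_v2.of_le (by norm_num)
  have hpd := hpC.differentiable one_ne_zero
  have hwd := hwC.differentiable one_ne_zero
  have hG : ContDiff ℝ 1 fun q => p q ^ 2 + w q ^ 2 := (hpC.pow 2).add (hwC.pow 2)
  have hslice : Continuous fun x : ℝ => (t, x) := by fun_prop
  have key : ∫ x in (0 : ℝ)..1, fderiv ℝ (fun q => p q ^ 2 + w q ^ 2) (t, x) (1, 0) =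
      2 * p (t, 1) * w (t, 1) - 2 * p (t, 0) * w (t, 0) := by
    refine integral_eq_sub_of_hasDerivAt (f := fun x => 2 * p (t, x) * w (t, x))
      (fun x hx => ?_)
      ((((hG.continuous_fderiv one_ne_zero).clm_apply
        continuous_const).comp hslice).intervalIntegrable 0 1)
    rw [uIcc_of_le zero_le_one] at hx
    have hG' := (hG.differentiable one_ne_zero (t, x)).hasDerivAt_prodMk_left.unique
      (((hpd (t, x)).hasDerivAt_prodMk_left.pow 2).add
        ((hwd (t, x)).hasDerivAt_prodMk_left.pow 2))
    rw [hG', S.fderiv_fderiv_v1_time ht hx, S.fderiv_v2_time ht hx]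
    refine (((hpd (t, x)).hasDerivAt_prodMk_right.const_mul 2).mul
      (hwd (t, x)).hasDerivAt_prodMk_right).congr_deriv ?_
    push_cast
    ring
  have h := hG.hasDerivAt_intervalIntegral 0 1 t
  rw [key, show w (t, 1) = 0 from S.v2_right hT ht,
    show w (t, 0) = γ₁ * S.ξ2 t from S.v2_left hT ht] at h
  exact h.congr_deriv (by simp only [hp]; ring)

end FwdObserverSol

/-- the Lyapunov function
`V(t) = ½(∫₀¹(|∂ₓv¹|² + |v²|²) dx + γ₁ω²ξ₁² + γ₁ξ₂²)` is differentiable along the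
forward observer dynamics with `V'(t) = −γ₁γ₂ω²ξ₁(t)² ≤ 0` on `[0,T]`. -/
theorem forward_lyapunov_decrease
    (T ω γ₁ γ₂ : ℝ) (hT : 0 < T) (hγ₁ : 0 < γ₁) (hγ₂ : 0 < γ₂)
    (S : FwdObserverSol T ω γ₁ γ₂)
    (V : ℝ → ℝ)
    (hV : V = fun t =>
      (1 / 2) * ((∫ x in (0:ℝ)..1,
          ((deriv (fun y => S.v1 t y) x) ^ 2 + (S.v2 t x) ^ 2))
        + γ₁ * ω ^ 2 * (S.ξ1 t) ^ 2 + γ₁ * (S.ξ2 t) ^ 2)) :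
    ∀ t ∈ Icc (0:ℝ) T,
      HasDerivAt V (-(γ₁ * γ₂ * ω ^ 2 * (S.ξ1 t) ^ 2)) t
        ∧ -(γ₁ * γ₂ * ω ^ 2 * (S.ξ1 t) ^ 2) ≤ 0 := by
  intro t ht
  have h1 := (S.smooth_ξ1.differentiable one_ne_zero t).hasDerivAt
  have h2 := (S.smooth_ξ2.differentiable one_ne_zero t).hasDerivAt
  rw [S.ode1 t ht] at h1
  rw [S.ode2 t ht] at h2
  refine ⟨?_, neg_nonpos.2 (by positivity)⟩
  rw [hV]
  refine ((((S.hasDerivAt_energy hT ht).add ((h1.pow 2).const_mul (γ₁ * ω ^ 2))).add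
    ((h2.pow 2).const_mul γ₁)).const_mul (1 / 2)).congr_deriv ?_
  push_cast
  ring
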